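/- arXiv:2101.00450 — 10 statements merged into one kernel-verified Lean document; each statement's English description precedes it below -/
import Mathlib

section
/- Let γ > 1, A0 > 0 and 0 < r0 < r1. Suppose ρ, U1, U2 : [r0, r1] → ℝ are differentiable with ρ(r) > 0, U1(r) ≠ 0 and M1(r)² < 1 for all r ∈ [r0, r1], and that (ρ, U1, U2) satisfies the radially symmetric steady Euler system on [r0, r1]. Then for every r ∈ [r0, r1]: (M1²)'(r) = M1(r)² (2 + (γ−1)M1(r)² + (γ+1)M2(r)²) / (r (M1(r)² − 1)), (M2²)'(r) = M2(r)² (2 + (γ−3)M1(r)² + (γ−1)M2(r)²) / (r (M1(r)² − 1)), and (M1² + M2²)'(r) = (M1(r)² + M2(r)²)(2 + (γ−1)(M1(r)² + M2(r)²)) / (r (M1(r)² − 1)). -/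
open Real Set

/-- For a radially symmetric steady Euler flow on `[r0, r1]` with positive
density, nonvanishing radial velocity and subsonic radial Mach number, the squared Mach
numbers `M1²`, `M2²` and the squared total Mach number satisfy the stated ODEs. -/
theorem mach_number_odes
    (γ A0 r0 r1 : ℝ) (hγ : 1 < γ) (hA0 : 0 < A0) (hr0 : 0 < r0) (hr01 : r0 < r1)
    (ρ U1 U2 ρ' U1' U2' : ℝ → ℝ)
    (hρ : ∀ r ∈ Icc r0 r1, HasDerivWithinAt ρ (ρ' r) (Icc r0 r1) r)
    (hU1 : ∀ r ∈ Icc r0 r1, HasDerivWithinAt U1 (U1' r) (Icc r0 r1) r)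
    (hU2 : ∀ r ∈ Icc r0 r1, HasDerivWithinAt U2 (U2' r) (Icc r0 r1) r)
    (hρpos : ∀ r ∈ Icc r0 r1, 0 < ρ r)
    (hU1ne : ∀ r ∈ Icc r0 r1, U1 r ≠ 0)
    (c M1 M2 : ℝ → ℝ)
    (hc : ∀ r, c r = Real.sqrt (A0 * γ) * ρ r ^ ((γ - 1) / 2))
    (hM1 : ∀ r, M1 r = U1 r / c r) (hM2 : ∀ r, M2 r = U2 r / c r)
    (hsub : ∀ r ∈ Icc r0 r1, (M1 r) ^ 2 < 1)
    (heq1 : ∀ r ∈ Icc r0 r1, ρ' r * U1 r + ρ r * U1' r + ρ r * U1 r / r = 0)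
    (heq2 : ∀ r ∈ Icc r0 r1,
      U1 r * U1' r + (1 / ρ r) * (A0 * γ * ρ r ^ (γ - 1) * ρ' r) - (U2 r) ^ 2 / r = 0)
    (heq3 : ∀ r ∈ Icc r0 r1, U1 r * U2' r + U1 r * U2 r / r = 0) :
    ∀ r ∈ Icc r0 r1,
      HasDerivWithinAt (fun s => (M1 s) ^ 2)
        ((M1 r) ^ 2 * (2 + (γ - 1) * (M1 r) ^ 2 + (γ + 1) * (M2 r) ^ 2)
          / (r * ((M1 r) ^ 2 - 1))) (Icc r0 r1) r ∧
      HasDerivWithinAt (fun s => (M2 s) ^ 2)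
        ((M2 r) ^ 2 * (2 + (γ - 3) * (M1 r) ^ 2 + (γ - 1) * (M2 r) ^ 2)
          / (r * ((M1 r) ^ 2 - 1))) (Icc r0 r1) r ∧
      HasDerivWithinAt (fun s => (M1 s) ^ 2 + (M2 s) ^ 2)
        (((M1 r) ^ 2 + (M2 r) ^ 2) * (2 + (γ - 1) * ((M1 r) ^ 2 + (M2 r) ^ 2))
          / (r * ((M1 r) ^ 2 - 1))) (Icc r0 r1) r := by
  intro r hr
  have hrpos : 0 < r := lt_of_lt_of_le hr0 hr.1
  have hγ0 : 0 < A0 * γ := by positivity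
  have hcsq : ∀ s ∈ Icc r0 r1, (c s) ^ 2 = A0 * γ * ρ s ^ (γ - 1) := by
    intro s hs
    rw [hc, mul_pow, Real.sq_sqrt hγ0.le, ← Real.rpow_natCast (ρ s ^ ((γ - 1) / 2)),
      ← Real.rpow_mul (hρpos s hs).le]
    congr 2
    push_cast
    ring
  have hρr := hρpos r hr
  have hpow : ρ r ^ (γ - 1 - 1) = ρ r ^ (γ - 1) / ρ r := Real.rpow_sub_one hρr.ne' _
  have hP : 0 < ρ r ^ (γ - 1) := Real.rpow_pos_of_pos hρr _
  have hC : HasDerivWithinAt (fun s => A0 * γ * ρ s ^ (γ - 1))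
      ((γ - 1) * (A0 * γ * ρ r ^ (γ - 1)) * (ρ' r / ρ r)) (Icc r0 r1) r := by
    have h := ((hρ r hr).rpow_const (p := γ - 1) (Or.inl hρr.ne')).const_mul (A0 * γ)
    refine h.congr_deriv ?_
    rw [hpow]
    ring
  have hCpos : 0 < A0 * γ * ρ r ^ (γ - 1) := by positivity
  have key : ∀ U U' M : ℝ → ℝ, HasDerivWithinAt U (U' r) (Icc r0 r1) r →
      (∀ s, M s = U s / c s) →
      HasDerivWithinAt (fun s => (M s) ^ 2)
        (2 * U r * U' r / (A0 * γ * ρ r ^ (γ - 1)) - (γ - 1) * (ρ' r / ρ r) * (M r) ^ 2)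
        (Icc r0 r1) r := by
    intro U U' M hU hM
    have h := (hU.pow 2).div hC hCpos.ne'
    have e : ∀ s ∈ Icc r0 r1, (M s) ^ 2 = U s ^ 2 / (A0 * γ * ρ s ^ (γ - 1)) := by
      intro s hs
      rw [hM, div_pow, hcsq s hs]
    refine (h.congr (fun s hs => by simpa using e s hs) (by simpa using e r hr)).congr_deriv ?_
    rw [e r hr]
    generalize A0 * γ * ρ r ^ (γ - 1) = C at hCpos
    have := hCpos.ne'
    simp only [Pi.pow_apply]
    field_simp
    push_cast
    ring
  have k1 := key U1 U1' M1 (hU1 r hr) hM1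
  have k2 := key U2 U2' M2 (hU2 r hr) hM2
  have m1 : (M1 r) ^ 2 * (A0 * γ * ρ r ^ (γ - 1)) = U1 r ^ 2 := by
    rw [hM1, div_pow, hcsq r hr]; field_simp
  have m2 : (M2 r) ^ 2 * (A0 * γ * ρ r ^ (γ - 1)) = U2 r ^ 2 := by
    rw [hM2, div_pow, hcsq r hr]; field_simp
  have hs := hsub r hr
  have e1 := heq1 r hr
  have e2 := heq2 r hr
  have e3 := heq3 r hr
  have hu := hU1ne r hr
  have hu1 : U1' r = -U1 r / r - U1 r * (ρ' r / ρ r) := by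
    field_simp at e1 ⊢
    linear_combination e1
  have hu2 : U2' r = -U2 r / r := by
    apply mul_left_cancel₀ hu
    linear_combination e3
  have e2' : U1 r * U1' r + (A0 * γ * ρ r ^ (γ - 1)) * (ρ' r / ρ r) - (U2 r) ^ 2 / r = 0 := by
    rw [← e2]; ring
  rw [hu1] at k1 e2'
  rw [hu2] at k2
  generalize A0 * γ * ρ r ^ (γ - 1) = C at *
  generalize ρ' r / ρ r = q at *
  have hC0 := hCpos.ne'
  have hm : (M1 r) ^ 2 - 1 ≠ 0 := by linarith
  have hq : q = -((M1 r) ^ 2 + (M2 r) ^ 2) / (r * ((M1 r) ^ 2 - 1)) := by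
    rw [eq_div_iff (by positivity)]
    apply mul_left_cancel₀ hC0
    field_simp at e2'
    linear_combination -e2' + (r * q + 1) * m1 + m2
  have d1 : 2 * U1 r * (-U1 r / r - U1 r * q) / C - (γ - 1) * q * (M1 r) ^ 2 =
      (M1 r) ^ 2 * (2 + (γ - 1) * (M1 r) ^ 2 + (γ + 1) * (M2 r) ^ 2)
          / (r * ((M1 r) ^ 2 - 1)) := by
    have : 2 * U1 r * (-U1 r / r - U1 r * q) / C = 2 * (M1 r) ^ 2 * (-1 / r - q) := by
      rw [div_eq_iff hC0]
      linear_combination (-2 * (-1 / r - q)) * m1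
    rw [this, hq]
    generalize (M1 r) ^ 2 = m at *
    field_simp
    ring
  have d2 : 2 * U2 r * (-U2 r / r) / C - (γ - 1) * q * (M2 r) ^ 2 =
      (M2 r) ^ 2 * (2 + (γ - 3) * (M1 r) ^ 2 + (γ - 1) * (M2 r) ^ 2)
          / (r * ((M1 r) ^ 2 - 1)) := by
    have : 2 * U2 r * (-U2 r / r) / C = 2 * (M2 r) ^ 2 * (-1 / r) := by
      rw [div_eq_iff hC0]
      linear_combination (-2 * (-1 / r)) * m2
    rw [this, hq]
    generalize (M1 r) ^ 2 = m at *
    field_simp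
    ring
  rw [d1] at k1
  rw [d2] at k2
  refine ⟨k1, k2, (k1.add k2).congr_deriv ?_⟩
  rw [← add_div]
  congr 1
  ring
end

section
/- Let γ > 1, A0 > 0 and 0 < r0 < r1. Suppose ρ, U1, U2 : [r0, r1] → ℝ are differentiable with ρ(r) > 0, U1(r) ≠ 0 and M1(r)² < 1 for all r ∈ [r0, r1], and that (ρ, U1, U2) satisfies the radially symmetric steady Euler system on [r0, r1]. Then the total Mach number squared r ↦ M1(r)² + M2(r)² is strictly decreasing on [r0, r1] (i.e., the total Mach number monotonically increases as r decreases from r1 to r0). -/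
open Real Set

/-- For a radially symmetric steady Euler flow on `[r0, r1]` with positive
density, nonvanishing radial velocity and subsonic radial Mach number, the squared total
Mach number `M1² + M2²` is strictly decreasing on `[r0, r1]`. -/
theorem total_mach_strictAnti
    (γ A0 r0 r1 : ℝ) (hγ : 1 < γ) (hA0 : 0 < A0) (hr0 : 0 < r0) (hr01 : r0 < r1)
    (ρ U1 U2 ρ' U1' U2' : ℝ → ℝ)
    (hρ : ∀ r ∈ Icc r0 r1, HasDerivWithinAt ρ (ρ' r) (Icc r0 r1) r)
    (hU1 : ∀ r ∈ Icc r0 r1, HasDerivWithinAt U1 (U1' r) (Icc r0 r1) r)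
    (hU2 : ∀ r ∈ Icc r0 r1, HasDerivWithinAt U2 (U2' r) (Icc r0 r1) r)
    (hρpos : ∀ r ∈ Icc r0 r1, 0 < ρ r)
    (hU1ne : ∀ r ∈ Icc r0 r1, U1 r ≠ 0)
    (c M1 M2 : ℝ → ℝ)
    (hc : ∀ r, c r = Real.sqrt (A0 * γ) * ρ r ^ ((γ - 1) / 2))
    (hM1 : ∀ r, M1 r = U1 r / c r) (hM2 : ∀ r, M2 r = U2 r / c r)
    (hsub : ∀ r ∈ Icc r0 r1, (M1 r) ^ 2 < 1)
    (heq1 : ∀ r ∈ Icc r0 r1, ρ' r * U1 r + ρ r * U1' r + ρ r * U1 r / r = 0)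
    (heq2 : ∀ r ∈ Icc r0 r1,
      U1 r * U1' r + (1 / ρ r) * (A0 * γ * ρ r ^ (γ - 1) * ρ' r) - (U2 r) ^ 2 / r = 0)
    (heq3 : ∀ r ∈ Icc r0 r1, U1 r * U2' r + U1 r * U2 r / r = 0) :
    StrictAntiOn (fun r => (M1 r) ^ 2 + (M2 r) ^ 2) (Icc r0 r1) := by
  have hAγ : 0 < A0 * γ := by positivity
  have hF : ∀ r ∈ Icc r0 r1, (M1 r) ^ 2 = (U1 r) ^ 2 / (A0 * γ * ρ r ^ (γ - 1)) ∧
      (M2 r) ^ 2 = (U2 r) ^ 2 / (A0 * γ * ρ r ^ (γ - 1)) := by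
    intro r hr
    have hcs : (c r) ^ 2 = A0 * γ * ρ r ^ (γ - 1) := by
      rw [hc, mul_pow, Real.sq_sqrt hAγ.le, ← Real.rpow_natCast (ρ r ^ ((γ - 1) / 2)),
        ← Real.rpow_mul (hρpos r hr).le]
      norm_num
    rw [hM1, hM2, div_pow, div_pow, hcs]
    exact ⟨rfl, rfl⟩
  set G : ℝ → ℝ := fun r => ((U1 r) ^ 2 + (U2 r) ^ 2) / (A0 * γ * ρ r ^ (γ - 1)) with hG
  have hEq : EqOn G (fun r => (M1 r) ^ 2 + (M2 r) ^ 2) (Icc r0 r1) := by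
    intro r hr
    simp only [hG]
    rw [(hF r hr).1, (hF r hr).2, add_div]
  refine StrictAntiOn.congr ?_ hEq
  have hder : ∀ r ∈ Icc r0 r1, ∃ d, d < 0 ∧ HasDerivWithinAt G d (Icc r0 r1) r := by
    intro r hr
    have hρr := hρpos r hr
    have hrpos : 0 < r := lt_of_lt_of_le hr0 hr.1
    have hPpos : 0 < ρ r ^ (γ - 1) := Real.rpow_pos_of_pos hρr _
    have hD := (((hU1 r hr).pow 2).add ((hU2 r hr).pow 2)).div
      (((hρ r hr).rpow_const (p := γ - 1) (Or.inl hρr.ne')).const_mul (A0 * γ))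
      (mul_pos hAγ hPpos).ne'
    refine ⟨_, ?_, hD⟩
    have hs := hsub r hr
    rw [(hF r hr).1, div_lt_one (mul_pos hAγ hPpos)] at hs
    have e1 := heq1 r hr
    have e2 := heq2 r hr
    have e3 := heq3 r hr
    have hu := hU1ne r hr
    rw [Real.rpow_sub_one hρr.ne' (γ - 1)]
    simp only [Pi.add_apply, Pi.pow_apply]
    generalize ρ r ^ (γ - 1) = P at *
    generalize ρ r = a at *
    generalize U1 r = u at *
    generalize U2 r = v at *
    generalize U1' r = u' at *
    generalize U2' r = v' at *
    obtain ⟨q, hq⟩ : ∃ q, ρ' r = q * a := ⟨ρ' r / a, by field_simp⟩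
    rw [hq] at e1 e2 ⊢
    have hv : v' = - v / r := by
      apply mul_left_cancel₀ hu
      linear_combination e3
    have hu' : u' = - u * (q + 1 / r) := by
      apply mul_left_cancel₀ hρr.ne'
      linear_combination e1
    have e2' : u * u' + A0 * γ * P * q - v ^ 2 / r = 0 := by
      rw [← e2]; field_simp
    have hu2 : 0 < u ^ 2 := by positivity
    have hqq : q * (A0 * γ * P - u ^ 2) = (u ^ 2 + v ^ 2) / r := by
      rw [hu'] at e2'
      linear_combination e2'
    have hqpos : 0 < q := by
      have : 0 < q * (A0 * γ * P - u ^ 2) := by rw [hqq]; positivity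
      exact pos_of_mul_pos_left this (by linarith)
    apply div_neg_of_neg_of_pos _ (by positivity)
    have key : u * u' + v * v' = - (A0 * γ * P * q) := by
      rw [hv]; linear_combination e2'
    have hfin : 0 < A0 * γ * P * q * (2 * (A0 * γ * P) + (γ - 1) * (u ^ 2 + v ^ 2)) := by
      have : 0 < γ - 1 := by linarith
      positivity
    have hPa : q * a * (γ - 1) * (P / a) = q * (γ - 1) * P := by field_simp
    rw [hPa]
    norm_num
    linear_combination hfin + 2 * (A0 * γ * P) * key
  choose! d hd using hder
  refine strictAntiOn_of_hasDerivWithinAt_neg (f' := d) (convex_Icc r0 r1)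
    (fun r hr => (hd r hr).2.continuousWithinAt) ?_ ?_
  · intro r hr
    exact (hd r (interior_subset hr)).2.mono interior_subset
  · intro r hr
    exact (hd r (interior_subset hr)).1
end

section
/- Let γ > 1, A0 > 0 and 0 < r0 < r1. Suppose ρ, U1, U2 : [r0, r1] → ℝ are differentiable with ρ(r) > 0 and U1(r) ≠ 0 for all r, and that (ρ, U1, U2) satisfies the radially symmetric steady Euler system on [r0, r1]. Set κ1 = r1 ρ(r1) U1(r1), κ2 = r1 U2(r1) and B0 = ½(U1(r1)² + U2(r1)²) + γ A0 ρ(r1)^{γ−1}/(γ−1). If r̄ ∈ [r0, r1] is a sonic point, i.e. M1(r̄)² + M2(r̄)² = 1, then ρ(r̄) = (2(γ−1)B0 / ((γ+1) γ A0))^{1/(γ−1)} and r̄² = (γ+1)(κ1² + κ2² ρ(r̄)²) / (2(γ−1) B0 ρ(r̄)²). -/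
open Real Set

theorem const_aux {a b : ℝ} (hab : a < b) (f f' : ℝ → ℝ)
    (hf : ∀ r ∈ Icc a b, HasDerivWithinAt f (f' r) (Icc a b) r)
    (h0 : ∀ r ∈ Icc a b, f' r = 0) : ∀ r ∈ Icc a b, f r = f b := by
  have h := constant_of_derivWithin_zero (f := f) (a := a) (b := b)
    (fun r hr => (hf r hr).differentiableWithinAt)
    (fun r hr => by
      have hr' := Ico_subset_Icc_self hr
      rw [(hf r hr').derivWithin (uniqueDiffOn_Icc hab r hr'), h0 r hr'])
  intro r hr
  rw [h r hr, h b (right_mem_Icc.2 hab.le)]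

/-- At any sonic point `r̄` of a radially symmetric steady Euler flow,
the density equals the critical density `ρ_c` and `r̄²` is given by the stated formula in
terms of the mass flux `κ1`, the circulation `κ2` and the Bernoulli constant `B0`. -/
theorem sonic_point_location
    (γ A0 r0 r1 : ℝ) (hγ : 1 < γ) (hA0 : 0 < A0) (hr0 : 0 < r0) (hr01 : r0 < r1)
    (ρ U1 U2 ρ' U1' U2' : ℝ → ℝ)
    (hρ : ∀ r ∈ Icc r0 r1, HasDerivWithinAt ρ (ρ' r) (Icc r0 r1) r)
    (hU1 : ∀ r ∈ Icc r0 r1, HasDerivWithinAt U1 (U1' r) (Icc r0 r1) r)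
    (hU2 : ∀ r ∈ Icc r0 r1, HasDerivWithinAt U2 (U2' r) (Icc r0 r1) r)
    (hρpos : ∀ r ∈ Icc r0 r1, 0 < ρ r)
    (hU1ne : ∀ r ∈ Icc r0 r1, U1 r ≠ 0)
    (heq1 : ∀ r ∈ Icc r0 r1, ρ' r * U1 r + ρ r * U1' r + ρ r * U1 r / r = 0)
    (heq2 : ∀ r ∈ Icc r0 r1,
      U1 r * U1' r + (1 / ρ r) * (A0 * γ * ρ r ^ (γ - 1) * ρ' r) - (U2 r) ^ 2 / r = 0)
    (heq3 : ∀ r ∈ Icc r0 r1, U1 r * U2' r + U1 r * U2 r / r = 0)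
    (c M1 M2 : ℝ → ℝ)
    (hc : ∀ r, c r = Real.sqrt (A0 * γ) * ρ r ^ ((γ - 1) / 2))
    (hM1 : ∀ r, M1 r = U1 r / c r) (hM2 : ∀ r, M2 r = U2 r / c r)
    (κ1 κ2 B0 : ℝ)
    (hκ1 : κ1 = r1 * ρ r1 * U1 r1) (hκ2 : κ2 = r1 * U2 r1)
    (hB0 : B0 = ((U1 r1) ^ 2 + (U2 r1) ^ 2) / 2 + γ * A0 * ρ r1 ^ (γ - 1) / (γ - 1))
    (rb : ℝ) (hrb : rb ∈ Icc r0 r1)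
    (hsonic : (M1 rb) ^ 2 + (M2 rb) ^ 2 = 1) :
    ρ rb = (2 * (γ - 1) * B0 / ((γ + 1) * γ * A0)) ^ ((1 : ℝ) / (γ - 1)) ∧
    rb ^ 2 = (γ + 1) * (κ1 ^ 2 + κ2 ^ 2 * (ρ rb) ^ 2)
      / (2 * (γ - 1) * B0 * (ρ rb) ^ 2) := by
  have hrpos : ∀ r ∈ Icc r0 r1, 0 < r := fun r hr => lt_of_lt_of_le hr0 hr.1
  have hg : 0 < γ - 1 := by linarith
  have e3 : ∀ r ∈ Icc r0 r1, U2' r = - U2 r / r := by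
    intro r hr
    have h : U1 r * (U2' r + U2 r / r) = 0 := by rw [← heq3 r hr]; ring
    have h2 := (mul_eq_zero.1 h).resolve_left (hU1ne r hr)
    rw [neg_div]; linarith
  have k1 := const_aux hr01 (fun r => r * ρ r * U1 r) _
    (fun r hr => ((hasDerivWithinAt_id r _).mul (hρ r hr)).mul (hU1 r hr))
    (fun r hr => by
      have h := heq1 r hr
      have hp := (hrpos r hr).ne'
      field_simp at h
      simp only [id, Pi.mul_apply]
      linear_combination h) rb hrb
  have k2 := const_aux hr01 (fun r => r * U2 r) _
    (fun r hr => (hasDerivWithinAt_id r _).mul (hU2 r hr))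
    (fun r hr => by
      have hp := (hrpos r hr).ne'
      simp only [id]
      rw [e3 r hr]
      field_simp
      ring) rb hrb
  have kB := const_aux hr01
    (fun r => ((U1 r) ^ 2 + (U2 r) ^ 2) / 2 + γ * A0 / (γ - 1) * ρ r ^ (γ - 1)) _
    (fun r hr => ((((hU1 r hr).pow 2).add ((hU2 r hr).pow 2)).div_const 2).add
      (((hρ r hr).rpow_const (p := γ - 1) (Or.inl (hρpos r hr).ne')).const_mul (γ * A0 / (γ - 1))))
    (fun r hr => by
      have hp := (hrpos r hr).ne'
      have hq := (hρpos r hr).ne'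
      have h := heq2 r hr
      rw [e3 r hr, Real.rpow_sub_one hq (γ - 1)]
      have hg' := hg.ne'
      have : γ * A0 / (γ - 1) * (ρ' r * (γ - 1) * (ρ r ^ (γ - 1) / ρ r))
        = (1 / ρ r) * (A0 * γ * ρ r ^ (γ - 1) * ρ' r) := by field_simp
      rw [this]
      simp only [Nat.cast_ofNat]
      linear_combination h) rb hrb
  have hq := hρpos rb hrb
  have hb := hrpos rb hrb
  have hX : 0 < ρ rb ^ (γ - 1) := Real.rpow_pos_of_pos hq _
  have hc2 : c rb ^ 2 = A0 * γ * ρ rb ^ (γ - 1) := by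
    rw [hc, mul_pow, Real.sq_sqrt (by positivity), ← Real.rpow_natCast, ← Real.rpow_mul hq.le]
    congr 2
    push_cast; ring
  have hs : U1 rb ^ 2 + U2 rb ^ 2 = A0 * γ * ρ rb ^ (γ - 1) := by
    have hcp : 0 < c rb ^ 2 := by rw [hc2]; positivity
    rw [hM1, hM2, div_pow, div_pow, ← add_div, div_eq_one_iff_eq hcp.ne'] at hsonic
    rw [hsonic, hc2]
  have hB : 2 * (γ - 1) * B0 = (γ + 1) * γ * A0 * ρ rb ^ (γ - 1) := by
    have : B0 = A0 * γ * ρ rb ^ (γ - 1) / 2 + γ * A0 / (γ - 1) * ρ rb ^ (γ - 1) := by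
      rw [hB0, ← hs, kB]; ring
    rw [this]
    field_simp
    ring
  constructor
  · rw [hB, mul_div_cancel_left₀ _ (by positivity), ← Real.rpow_mul hq.le,
      mul_one_div_cancel hg.ne', Real.rpow_one]
  · rw [hB, hκ1, hκ2, ← k1, ← k2, eq_div_iff (by positivity)]
    linear_combination (-(γ + 1) * rb ^ 2 * ρ rb ^ 2) * hs
end

section
/- Let γ > 1, A0 > 0, B0 > 0 and κ2 ≠ 0, and set r♯ = |κ2|/√(2 B0). Define on (r♯, ∞): U1 ≡ 0, U2(r) = κ2/r and ρ(r) = ((γ−1)/(A0 γ))^{1/(γ−1)} (B0 − κ2²/(2r²))^{1/(γ−1)}. Then ρ(r) > 0 on (r♯, ∞) and (ρ, U1, U2) satisfies the radially symmetric steady Euler system on every compact subinterval of (r♯, ∞). Moreover, setting r_c = √((γ+1)/(2(γ−1)B0)) · |κ2|, one has r♯ < r_c, and the total Mach number squared M1² + M2² = U2²/c² equals 1 at r = r_c, is < 1 for r > r_c, and is > 1 for r♯ < r < r_c. -/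
open Real Set

/-- The purely circulatory flow `U1 ≡ 0`, `U2 = κ2/r`, with the explicit
density, is a solution of the radially symmetric steady Euler system on `(r♯, ∞)`
(with positive density), and its total Mach number crosses `1` exactly at
`r_c = √((γ+1)/(2(γ−1)B0)) |κ2| > r♯`: supersonic below `r_c`, subsonic above. -/
theorem circulatory_flow
    (γ A0 B0 κ2 rs rc : ℝ) (hγ : 1 < γ) (hA0 : 0 < A0) (hB0 : 0 < B0) (hκ2 : κ2 ≠ 0)
    (hrs : rs = |κ2| / Real.sqrt (2 * B0))
    (hrc : rc = Real.sqrt ((γ + 1) / (2 * (γ - 1) * B0)) * |κ2|)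
    (ρ U1 U2 c : ℝ → ℝ)
    (hU1 : ∀ r, U1 r = 0)
    (hU2 : ∀ r, U2 r = κ2 / r)
    (hρ : ∀ r, ρ r = ((γ - 1) / (A0 * γ)) ^ ((1 : ℝ) / (γ - 1))
      * (B0 - κ2 ^ 2 / (2 * r ^ 2)) ^ ((1 : ℝ) / (γ - 1)))
    (hc : ∀ r, c r = Real.sqrt (A0 * γ) * ρ r ^ ((γ - 1) / 2)) :
    (∀ r, rs < r → 0 < ρ r) ∧
    (∀ r, rs < r → ∃ dρ dU1 dU2 : ℝ,
      HasDerivAt ρ dρ r ∧ HasDerivAt U1 dU1 r ∧ HasDerivAt U2 dU2 r ∧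
      dρ * U1 r + ρ r * dU1 + ρ r * U1 r / r = 0 ∧
      U1 r * dU1 + (1 / ρ r) * (A0 * γ * ρ r ^ (γ - 1) * dρ) - (U2 r) ^ 2 / r = 0 ∧
      U1 r * dU2 + U1 r * U2 r / r = 0) ∧
    rs < rc ∧
    ((U1 rc) ^ 2 + (U2 rc) ^ 2) / (c rc) ^ 2 = 1 ∧
    (∀ r, rc < r → ((U1 r) ^ 2 + (U2 r) ^ 2) / (c r) ^ 2 < 1) ∧
    (∀ r, rs < r → r < rc → 1 < ((U1 r) ^ 2 + (U2 r) ^ 2) / (c r) ^ 2) := by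
  have hg : 0 < γ - 1 := by linarith
  have hγ0 : 0 < γ := by linarith
  have hAγ : 0 < A0 * γ := by positivity
  have hK : 0 < (γ - 1) / (A0 * γ) := by positivity
  have hk : 0 < |κ2| := abs_pos.mpr hκ2
  have hk2 : 0 < κ2 ^ 2 := by positivity
  have hrs0 : 0 < rs := by rw [hrs]; positivity
  have hrs2 : rs ^ 2 * (2 * B0) = κ2 ^ 2 := by
    rw [hrs, div_pow, Real.sq_sqrt (by positivity), sq_abs]; field_simp
  have hrc0 : 0 < rc := by rw [hrc]; positivity
  have hrc2 : rc ^ 2 * (2 * (γ - 1) * B0) = (γ + 1) * κ2 ^ 2 := by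
    rw [hrc, mul_pow, Real.sq_sqrt (by positivity), sq_abs]; field_simp
  have hG : ∀ r, rs < r → 0 < B0 - κ2 ^ 2 / (2 * r ^ 2) := by
    intro r hr
    have hr0 : 0 < r := by linarith
    have h2 : rs ^ 2 < r ^ 2 := by gcongr
    rw [sub_pos, div_lt_iff₀ (by positivity)]
    nlinarith
  have hpos : ∀ r, rs < r → 0 < ρ r := by
    intro r hr
    have := hG r hr
    rw [hρ]; positivity
  have hpow : ∀ r, rs < r →
      ρ r ^ (γ - 1) = (γ - 1) / (A0 * γ) * (B0 - κ2 ^ 2 / (2 * r ^ 2)) := by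
    intro r hr
    have h := hG r hr
    rw [hρ, Real.mul_rpow (by positivity) (by positivity), ← Real.rpow_mul hK.le,
      ← Real.rpow_mul h.le, one_div_mul_cancel hg.ne', Real.rpow_one, Real.rpow_one]
  have hc2 : ∀ r, rs < r → c r ^ 2 = (γ - 1) * (B0 - κ2 ^ 2 / (2 * r ^ 2)) := by
    intro r hr
    have e : (ρ r ^ ((γ - 1) / 2)) ^ 2 = ρ r ^ (γ - 1) := by
      rw [← Real.rpow_natCast, ← Real.rpow_mul (hpos r hr).le]
      congr 1; push_cast; ring
    rw [hc, mul_pow, Real.sq_sqrt hAγ.le, e, hpow r hr]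
    field_simp
  have hlt : rs < rc := by
    apply lt_of_pow_lt_pow_left₀ 2 hrc0.le
    have h1 : (rc ^ 2 - rs ^ 2) * (2 * (γ - 1) * B0) = 2 * κ2 ^ 2 := by
      linear_combination hrc2 - (γ - 1) * hrs2
    have h2 : 0 < 2 * (γ - 1) * B0 := by positivity
    have h3 : 0 < rc ^ 2 - rs ^ 2 := by
      refine pos_of_mul_pos_left ?_ h2.le
      rw [h1]; positivity
    linarith
  have hc0 : ∀ r, rs < r → 0 < c r ^ 2 := by
    intro r hr
    rw [hc2 r hr]; exact mul_pos hg (hG r hr)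
  have hdiff : ∀ r, rs < r → (c r ^ 2 - (U1 r ^ 2 + U2 r ^ 2)) * r ^ 2 =
      (γ - 1) * B0 * (r ^ 2 - rc ^ 2) := by
    intro r hr
    have hr0 : r ≠ 0 := by linarith
    rw [hc2 r hr, hU1, hU2]
    field_simp
    linear_combination hrc2
  refine ⟨hpos, ?_, hlt, ?_, ?_, ?_⟩
  · intro r hr
    have hr0 : r ≠ 0 := by linarith
    have h := hG r hr
    have hp := hpos r hr
    refine ⟨ρ r * (κ2 ^ 2 / r ^ 3 * (1 / (γ - 1)) / (B0 - κ2 ^ 2 / (2 * r ^ 2))), 0,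
      -κ2 / r ^ 2, ?_, ?_, ?_, ?_, ?_, ?_⟩
    · have hd : HasDerivAt (fun r : ℝ => B0 - κ2 ^ 2 / (2 * r ^ 2)) (κ2 ^ 2 / r ^ 3) r := by
        have h1 : HasDerivAt (fun r : ℝ => 2 * r ^ 2) (2 * (2 * r)) r := by
          simpa using (hasDerivAt_pow 2 r).const_mul 2
        have h2 := ((hasDerivAt_const r (κ2 ^ 2)).fun_div h1 (by positivity)).const_sub B0
        refine h2.congr_deriv ?_
        field_simp
        ring
      have h3 := (hd.rpow_const (p := 1 / (γ - 1)) (Or.inl h.ne')).const_mul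
        (((γ - 1) / (A0 * γ)) ^ ((1 : ℝ) / (γ - 1)))
      rw [funext hρ]
      refine h3.congr_deriv ?_
      rw [Real.rpow_sub_one h.ne']
      ring
    · rw [funext hU1]; exact hasDerivAt_const r 0
    · rw [funext hU2]
      have := (hasDerivAt_const r κ2).fun_div (hasDerivAt_id' r) hr0
      refine this.congr_deriv ?_
      ring
    · simp [hU1]
    · rw [hpow r hr, hU1, hU2]
      have h' := h.ne'
      have hp' := hp.ne'
      generalize B0 - κ2 ^ 2 / (2 * r ^ 2) = G at *
      field_simp
      ring
    · simp [hU1]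
  · rw [div_eq_one_iff_eq (hc0 rc hlt).ne']
    have h := hdiff rc hlt
    rw [sub_self, mul_zero] at h
    rcases mul_eq_zero.mp h with h | h
    · linarith
    · exact absurd h (by positivity)
  · intro r hr
    have hr' : rs < r := hlt.trans hr
    rw [div_lt_one (hc0 r hr')]
    have h2 : rc ^ 2 < r ^ 2 := by gcongr
    have h3 : 0 < (c r ^ 2 - (U1 r ^ 2 + U2 r ^ 2)) * r ^ 2 := by
      rw [hdiff r hr']; exact mul_pos (by positivity) (by linarith)
    have := pos_of_mul_pos_left h3 (sq_nonneg r)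
    linarith
  · intro r hr' hr
    rw [one_lt_div (hc0 r hr')]
    have hr0 : 0 < r := by linarith
    have h2 : r ^ 2 < rc ^ 2 := by gcongr
    have h3 : 0 < ((U1 r ^ 2 + U2 r ^ 2) - c r ^ 2) * r ^ 2 := by
      have e := hdiff r hr'
      have : 0 < (γ - 1) * B0 * (rc ^ 2 - r ^ 2) := mul_pos (by positivity) (by linarith)
      nlinarith
    have := pos_of_mul_pos_left h3 (sq_nonneg r)
    linarith
end

section
/- Let γ > 1, A0 > 0 and 0 < r0 < r1. Suppose ρ, U1, U2 : [r0, r1] → ℝ are differentiable with ρ(r) > 0 and M1(r)² < 1 for all r, and that they satisfy the background derivative relations ρ'(r) = (M1² + M2²)ρ/(r(1−M1²)), U1'(r) = −(1+M2²)U1/(r(1−M1²)), U2'(r) = −U2/r. Define A_{b11}(r) = c(r)² − U1(r)², e1(r) = (c² + U2²)/r + (γ+1)(1+M2²)U1²/(r(1−M1²)) − (γ−1)U1²/r, and e2(r) = (2(1−M1²) + (γ−1)(M1²+M2²)) U1 U2 / ((1−M1²) r²). Let f : [r0, r1] → ℝ be twice differentiable with f'(r) = M1(r) M2(r) / (r(1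 − M1(r)²)). Then k_{b2}(r) := f''(r) + (e1(r) f'(r) + e2(r)) / A_{b11}(r) = 0 for every r ∈ [r0, r1]. -/
open Real Set

/-- identity (2.1) of Proposition 2.1: for the background flow,
`k_{b2}(r) = f''(r) + (e1(r) f'(r) + e2(r)) / A_{b11}(r) ≡ 0` on `[r0, r1]`. -/
theorem kb2_vanishes
    (γ A0 r0 r1 : ℝ) (hγ : 1 < γ) (hA0 : 0 < A0) (hr0 : 0 < r0) (hr01 : r0 < r1)
    (ρ U1 U2 c M1 M2 : ℝ → ℝ)
    (hc : ∀ r, c r = Real.sqrt (A0 * γ) * ρ r ^ ((γ - 1) / 2))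
    (hM1 : ∀ r, M1 r = U1 r / c r) (hM2 : ∀ r, M2 r = U2 r / c r)
    (hρpos : ∀ r ∈ Icc r0 r1, 0 < ρ r)
    (hsub : ∀ r ∈ Icc r0 r1, (M1 r) ^ 2 < 1)
    (hρ' : ∀ r ∈ Icc r0 r1, HasDerivWithinAt ρ
      (((M1 r) ^ 2 + (M2 r) ^ 2) * ρ r / (r * (1 - (M1 r) ^ 2))) (Icc r0 r1) r)
    (hU1' : ∀ r ∈ Icc r0 r1, HasDerivWithinAt U1
      (-(1 + (M2 r) ^ 2) * U1 r / (r * (1 - (M1 r) ^ 2))) (Icc r0 r1) r)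
    (hU2' : ∀ r ∈ Icc r0 r1, HasDerivWithinAt U2 (-U2 r / r) (Icc r0 r1) r)
    (Ab11 e1 e2 : ℝ → ℝ)
    (hAb11 : ∀ r, Ab11 r = (c r) ^ 2 - (U1 r) ^ 2)
    (he1 : ∀ r, e1 r = ((c r) ^ 2 + (U2 r) ^ 2) / r
      + (γ + 1) * (1 + (M2 r) ^ 2) * (U1 r) ^ 2 / (r * (1 - (M1 r) ^ 2))
      - (γ - 1) * (U1 r) ^ 2 / r)
    (he2 : ∀ r, e2 r = (2 * (1 - (M1 r) ^ 2) + (γ - 1) * ((M1 r) ^ 2 + (M2 r) ^ 2))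
      * (U1 r * U2 r) / ((1 - (M1 r) ^ 2) * r ^ 2))
    (f f' f'' : ℝ → ℝ)
    (hf : ∀ r ∈ Icc r0 r1, HasDerivWithinAt f (f' r) (Icc r0 r1) r)
    (hfp : ∀ r ∈ Icc r0 r1, f' r = M1 r * M2 r / (r * (1 - (M1 r) ^ 2)))
    (hf' : ∀ r ∈ Icc r0 r1, HasDerivWithinAt f' (f'' r) (Icc r0 r1) r) :
    ∀ r ∈ Icc r0 r1, f'' r + (e1 r * f' r + e2 r) / Ab11 r = 0 := by
  intro r hr
  have hrpos : 0 < r := lt_of_lt_of_le hr0 hr.1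
  have hρ := hρpos r hr
  have hcpos : 0 < c r := by
    rw [hc]
    have : 0 < A0 * γ := by nlinarith
    exact mul_pos (Real.sqrt_pos.mpr this) (Real.rpow_pos_of_pos hρ _)
  have hD : 0 < 1 - M1 r ^ 2 := by linarith [hsub r hr]
  have hcd : HasDerivWithinAt c
      ((γ - 1) / 2 * ((M1 r ^ 2 + M2 r ^ 2) / (r * (1 - M1 r ^ 2))) * c r) (Icc r0 r1) r := by
    have h := ((hρ' r hr).rpow_const (p := (γ - 1) / 2) (Or.inl hρ.ne')).const_mul
      (Real.sqrt (A0 * γ))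
    have hce : c = fun r => Real.sqrt (A0 * γ) * ρ r ^ ((γ - 1) / 2) := funext hc
    rw [hce]
    refine h.congr_deriv ?_
    rw [Real.rpow_sub_one hρ.ne', ← hce]
    field_simp
    rw [hc r]
    ring
  have hU1e : U1 r = M1 r * c r := by rw [hM1]; field_simp
  have hU2e : U2 r = M2 r * c r := by rw [hM2]; field_simp
  have hm1 : HasDerivWithinAt M1 (-(M1 r) * ((1 + M2 r ^ 2) / (r * (1 - M1 r ^ 2))
      + (γ - 1) / 2 * ((M1 r ^ 2 + M2 r ^ 2) / (r * (1 - M1 r ^ 2))))) (Icc r0 r1) r := by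
    have h := (hU1' r hr).div hcd hcpos.ne'
    have he : M1 = U1 / c := funext hM1
    have h2 := h.congr_deriv (g' := -(M1 r) * ((1 + M2 r ^ 2) / (r * (1 - M1 r ^ 2))
      + (γ - 1) / 2 * ((M1 r ^ 2 + M2 r ^ 2) / (r * (1 - M1 r ^ 2))))) (by
        rw [hU1e]; field_simp; ring)
    exact h2.congr_of_eventuallyEq (by rw [← he]) (by rw [← he])
  have hm2 : HasDerivWithinAt M2 (-(M2 r) * (1 / r
      + (γ - 1) / 2 * ((M1 r ^ 2 + M2 r ^ 2) / (r * (1 - M1 r ^ 2))))) (Icc r0 r1) r := by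
    have h := (hU2' r hr).div hcd hcpos.ne'
    have he : M2 = U2 / c := funext hM2
    have h2 := h.congr_deriv (g' := -(M2 r) * (1 / r
      + (γ - 1) / 2 * ((M1 r ^ 2 + M2 r ^ 2) / (r * (1 - M1 r ^ 2))))) (by
        rw [hU2e]; field_simp; ring)
    exact h2.congr_of_eventuallyEq (by rw [← he]) (by rw [← he])
  have hden : HasDerivWithinAt (fun x => x * (1 - M1 x ^ 2)) _ (Icc r0 r1) r :=
    (hasDerivWithinAt_id r _).mul ((hm1.pow 2).const_sub 1)
  have hq := (hm1.mul hm2).div hden (mul_pos hrpos hD).ne'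
  have hq2 := hq.congr (f₁ := f') (fun x hx => by simpa using hfp x hx) (by simpa using hfp r hr)
  have hu := (uniqueDiffOn_Icc hr01 r hr).eq_deriv _ (hf' r hr) hq2
  have hA : Ab11 r = c r ^ 2 * (1 - M1 r ^ 2) := by rw [hAb11, hU1e]; ring
  rw [hu, hA, he1, he2, hfp r hr, hU1e, hU2e]
  simp only [id, Pi.mul_apply, Pi.pow_apply]
  generalize M1 r = m at *
  generalize M2 r = n at *
  generalize c r = C at *
  have h1 := hD.ne'
  have h2 := hcpos.ne'
  have h3 := hrpos.ne'
  field_simp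
  push_cast
  ring
end

section
/- Let γ > 1 and 0 < r0 < r1. Suppose m1, m2 : [r0, r1] → ℝ are differentiable with 0 ≤ m1(r) < 1 for all r, and satisfy the Mach-number ODEs m1'(r) = m1 (2 + (γ−1)m1 + (γ+1)m2) / (r(m1 − 1)) and m2'(r) = m2 (2 + (γ−3)m1 + (γ−1)m2) / (r(m1 − 1)). Define k_{b1}(r) = (1 + m2 + 2m1 + (γ+1) m1 (m1 + m2)/(1 − m1)) / (r(1 − m1)) and k_{b22}(r) = (1 − m1 − m2) / (r²(1 − m1)²). Then for every r ∈ [r0, r1]: 2 k_{b1}(r) k_{b22}(r) + k_{b22}'(r) = (m1 + m2)(4 − (3−γ)(m1 + m2)) / (r³ (1 − m1)³). -/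
open Real Set

/-- identity (2.2) of Proposition 2.1: for the squared Mach numbers
`m1, m2` of the background flow, `2 k_{b1} k_{b22} + k_{b22}'
= (m1+m2)(4 − (3−γ)(m1+m2)) / (r³(1−m1)³)`. -/
theorem kb22_identity
    (γ r0 r1 : ℝ) (hγ : 1 < γ) (hr0 : 0 < r0) (hr01 : r0 < r1)
    (m1 m2 : ℝ → ℝ)
    (hm1range : ∀ r ∈ Icc r0 r1, 0 ≤ m1 r ∧ m1 r < 1)
    (hm1' : ∀ r ∈ Icc r0 r1, HasDerivWithinAt m1
      (m1 r * (2 + (γ - 1) * m1 r + (γ + 1) * m2 r) / (r * (m1 r - 1))) (Icc r0 r1) r)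
    (hm2' : ∀ r ∈ Icc r0 r1, HasDerivWithinAt m2
      (m2 r * (2 + (γ - 3) * m1 r + (γ - 1) * m2 r) / (r * (m1 r - 1))) (Icc r0 r1) r)
    (kb1 kb22 : ℝ → ℝ)
    (hkb1 : ∀ r, kb1 r = (1 + m2 r + 2 * m1 r
      + (γ + 1) * m1 r * (m1 r + m2 r) / (1 - m1 r)) / (r * (1 - m1 r)))
    (hkb22 : ∀ r, kb22 r = (1 - m1 r - m2 r) / (r ^ 2 * (1 - m1 r) ^ 2)) :
    ∀ r ∈ Icc r0 r1, HasDerivWithinAt kb22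
      ((m1 r + m2 r) * (4 - (3 - γ) * (m1 r + m2 r)) / (r ^ 3 * (1 - m1 r) ^ 3)
        - 2 * kb1 r * kb22 r) (Icc r0 r1) r := by
  intro r hr
  have hrne : r ≠ 0 := (lt_of_lt_of_le hr0 hr.1).ne'
  have ha : 1 - m1 r ≠ 0 := by
    have := (hm1range r hr).2
    linarith
  have ha2 : m1 r - 1 ≠ 0 := by
    intro h
    apply ha
    linarith
  have hf : kb22 = fun x => (1 - m1 x - m2 x) / (x ^ 2 * (1 - m1 x) ^ 2) := funext hkb22
  have h1 := (hm1' r hr).const_sub 1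
  have hn := h1.fun_sub (hm2' r hr)
  have hd := ((hasDerivWithinAt_id r (Icc r0 r1)).fun_pow 2).fun_mul (h1.fun_pow 2)
  have hq := hn.fun_div hd (by simp only [id]; positivity)
  rw [hkb1, hkb22, hf]
  refine hq.congr_deriv ?_
  have e : r * (m1 r - 1) = -(r * (1 - m1 r)) := by ring
  rw [e]
  simp only [id, div_neg]
  generalize m1 r = a at *
  generalize m2 r = b at *
  obtain ⟨c, hc⟩ : ∃ c, c = 1 - a := ⟨_, rfl⟩
  have hac : a = 1 - c := by linarith
  rw [← hc] at ha ⊢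
  clear hc
  subst hac
  field_simp
  push_cast
  ring
end

section
/- Let γ ≥ 1 and 0 < r0 < r1. Suppose m1, m2 : [r0, r1] → ℝ are differentiable with 0 ≤ m1(r) < 1 and m2(r) ≥ 0 for all r, and satisfy the Mach-number ODEs m1'(r) = m1 (2 + (γ−1)m1 + (γ+1)m2) / (r(m1 − 1)) and m2'(r) = m2 (2 + (γ−3)m1 + (γ−1)m2) / (r(m1 − 1)). Define k_{b1}(r) = (1 + m2 + 2m1 + (γ+1) m1 (m1 + m2)/(1 − m1)) / (r(1 − m1)) and k_{b33}(r) = 1/(1 − m1(r)). Then for every r ∈ [r0, r1]: 2 k_{b1}(r) k_{b33}(r) + k_{b33}'(r) = (2 + 2 m2 + (γ−1) m1 (m1 + m2)) / (r (1 − m1)³), and this quantity is strictly positive. -/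
open Real Set

/-- identity (2.3) of Proposition 2.1: for the squared Mach numbers
`m1, m2` of the background flow, `2 k_{b1} k_{b33} + k_{b33}'
= (2 + 2m2 + (γ−1)m1(m1+m2)) / (r(1−m1)³) > 0`. -/
theorem kb33_identity
    (γ r0 r1 : ℝ) (hγ : 1 ≤ γ) (hr0 : 0 < r0) (hr01 : r0 < r1)
    (m1 m2 : ℝ → ℝ)
    (hm1range : ∀ r ∈ Icc r0 r1, 0 ≤ m1 r ∧ m1 r < 1)
    (hm2nonneg : ∀ r ∈ Icc r0 r1, 0 ≤ m2 r)
    (hm1' : ∀ r ∈ Icc r0 r1, HasDerivWithinAt m1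
      (m1 r * (2 + (γ - 1) * m1 r + (γ + 1) * m2 r) / (r * (m1 r - 1))) (Icc r0 r1) r)
    (hm2' : ∀ r ∈ Icc r0 r1, HasDerivWithinAt m2
      (m2 r * (2 + (γ - 3) * m1 r + (γ - 1) * m2 r) / (r * (m1 r - 1))) (Icc r0 r1) r)
    (kb1 kb33 : ℝ → ℝ)
    (hkb1 : ∀ r, kb1 r = (1 + m2 r + 2 * m1 r
      + (γ + 1) * m1 r * (m1 r + m2 r) / (1 - m1 r)) / (r * (1 - m1 r)))
    (hkb33 : ∀ r, kb33 r = 1 / (1 - m1 r)) :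
    ∀ r ∈ Icc r0 r1,
      HasDerivWithinAt kb33
        ((2 + 2 * m2 r + (γ - 1) * m1 r * (m1 r + m2 r)) / (r * (1 - m1 r) ^ 3)
          - 2 * kb1 r * kb33 r) (Icc r0 r1) r ∧
      0 < (2 + 2 * m2 r + (γ - 1) * m1 r * (m1 r + m2 r)) / (r * (1 - m1 r) ^ 3) := by
  intro r hr
  obtain ⟨h0, h1⟩ := hm1range r hr
  have h2 := hm2nonneg r hr
  have hrpos : 0 < r := lt_of_lt_of_le hr0 hr.1
  have hd : 0 < 1 - m1 r := by linarith
  have hg : 0 ≤ γ - 1 := by linarith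
  refine ⟨?_, by positivity⟩
  have hk : kb33 = fun x => (1 - m1 x)⁻¹ := by
    funext x
    rw [hkb33, one_div]
  have hD := ((hm1' r hr).const_sub 1).fun_inv hd.ne'
  rw [hkb1, hkb33, hk]
  refine hD.congr_deriv ?_
  have e : m1 r - 1 = -(1 - m1 r) := by ring
  rw [e]
  generalize hw : 1 - m1 r = d at *
  have hm : m1 r = 1 - d := by linarith
  rw [hm]
  have hdn := hd.ne'
  have hrn := hrpos.ne'
  field_simp
  ring
end

section
/- Let r0 < r1, let k1 : [r0, r1] → ℝ be continuous, and let k22 : [r0, r1] → ℝ be continuously differentiable with 2 k1(y) k22(y) + k22'(y) ≥ c0 for all y ∈ [r0, r1], for some constant c0 > 0. For each σ1 ∈ (0, 1/2] let l1^{σ1} be the function defined by l1^{σ1}(y) = exp(∫_{r0}^{y} 2k1(τ)dτ) · (1 + 2∫_{r0}^{r1} exp(−∫_{r0}^{t} 2k1) dt − 2σ1 ∫_{r0}^{y} exp(−∫_{r0}^{t} 2k1) dt). Then there exist constants σ2 ∈ (0, 1/2] and σ3 > 0 such that for every σ1 ∈ (0, σ2] and every y ∈ [r0, r1], (l1^{σ1}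 · k22)'(y) ≥ σ3. -/
open Real Set

theorem aux_ftc (a b : ℝ) (hab : a < b) (f : ℝ → ℝ) (hf : ContinuousOn f (Icc a b)) :
    ∀ y ∈ Icc a b, HasDerivWithinAt (fun x => ∫ t in a..x, f t) (f y) (Icc a b) y := by
  intro y hy
  have hg : Continuous (IccExtend hab.le ((Icc a b).domRestrict f)) :=
    (continuousOn_iff_continuous_domRestrict.1 hf).Icc_extend'
  have hgf : ∀ x ∈ Icc a b, IccExtend hab.le ((Icc a b).domRestrict f) x = f x := by
    intro x hx
    rw [IccExtend_of_mem _ _ hx]; rfl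
  have h1 := (intervalIntegral.integral_hasDerivAt_right (hg.intervalIntegrable a y)
    (hg.stronglyMeasurableAtFilter _ _) hg.continuousAt).hasDerivWithinAt (s := Icc a b)
  rw [hgf y hy] at h1
  have key : ∀ x ∈ Icc a b, (∫ t in a..x, f t) =
      ∫ t in a..x, IccExtend hab.le ((Icc a b).domRestrict f) t := by
    intro x hx
    apply intervalIntegral.integral_congr
    intro t ht
    rw [uIcc_of_le hx.1] at ht
    exact (hgf t ⟨ht.1, ht.2.trans hx.2⟩).symm
  exact h1.congr key (key y hy)

/-- if `2 k1 k22 + k22' ≥ c0 > 0` on `[r0, r1]`, then for all sufficiently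
small `σ1 > 0` the product `l1^{σ1} · k22` has derivative bounded below by some `σ3 > 0`
on `[r0, r1]`, where `l1^{σ1}` is the explicit multiplier. -/
theorem multiplier_product_positive
    (r0 r1 c0 : ℝ) (hr : r0 < r1) (hc0 : 0 < c0)
    (k1 : ℝ → ℝ) (hk1 : ContinuousOn k1 (Icc r0 r1))
    (k22 k22' : ℝ → ℝ)
    (hk22 : ∀ y ∈ Icc r0 r1, HasDerivWithinAt k22 (k22' y) (Icc r0 r1) y)
    (hk22'c : ContinuousOn k22' (Icc r0 r1))
    (hpos : ∀ y ∈ Icc r0 r1, c0 ≤ 2 * k1 y * k22 y + k22' y)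
    (l1 : ℝ → ℝ → ℝ)
    (hl1 : ∀ σ1 y : ℝ, l1 σ1 y = Real.exp (∫ τ in r0..y, 2 * k1 τ) *
      ((1 + 2 * ∫ t in r0..r1, Real.exp (-∫ τ in r0..t, 2 * k1 τ))
        - 2 * σ1 * ∫ t in r0..y, Real.exp (-∫ τ in r0..t, 2 * k1 τ))) :
    ∃ σ2, 0 < σ2 ∧ σ2 ≤ 1 / 2 ∧ ∃ σ3 > 0, ∀ σ1, 0 < σ1 → σ1 ≤ σ2 →
      ∀ y ∈ Icc r0 r1, ∃ d, HasDerivWithinAt (fun t => l1 σ1 t * k22 t) d (Icc r0 r1) y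
        ∧ σ3 ≤ d := by
  have hA := aux_ftc r0 r1 hr (fun τ => 2 * k1 τ) (continuousOn_const.mul hk1)
  set A : ℝ → ℝ := fun x => ∫ τ in r0..x, 2 * k1 τ with hAdef
  have hAc : ContinuousOn A (Icc r0 r1) := fun y hy => (hA y hy).continuousWithinAt
  have hEc : ContinuousOn (fun t => Real.exp (-A t)) (Icc r0 r1) := hAc.neg.rexp
  have hJ := aux_ftc r0 r1 hr (fun t => Real.exp (-A t)) hEc
  set J : ℝ → ℝ := fun x => ∫ t in r0..x, Real.exp (-A t) with hJdef
  have hl : ∀ σ y, l1 σ y = Real.exp (A y) * ((1 + 2 * J r1) - 2 * σ * J y) := hl1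
  have hkc : ContinuousOn k22 (Icc r0 r1) := fun y hy => (hk22 y hy).continuousWithinAt
  have hJ0 : ∀ y ∈ Icc r0 r1, 0 ≤ J y := fun y hy =>
    intervalIntegral.integral_nonneg hy.1 (fun t _ => (Real.exp_pos _).le)
  have hJ1 : ∀ y ∈ Icc r0 r1, J y ≤ J r1 := by
    intro y hy
    apply intervalIntegral.integral_mono_interval le_rfl hy.1 hy.2
    · exact Filter.Eventually.of_forall (fun t => (Real.exp_pos _).le)
    · exact hEc.intervalIntegrable_of_Icc hr.le
  obtain ⟨M, hM⟩ := isCompact_Icc.exists_bound_of_continuousOn hkc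
  obtain ⟨x0, hx0, hmin⟩ := isCompact_Icc.exists_isMinOn (nonempty_Icc.2 hr.le) hAc
  have hM0 : 0 ≤ M := (norm_nonneg _).trans (hM r0 (left_mem_Icc.2 hr.le))
  have hm : 0 < Real.exp (A x0) := Real.exp_pos _
  have hmE : ∀ y ∈ Icc r0 r1, Real.exp (A x0) ≤ Real.exp (A y) :=
    fun y hy => Real.exp_le_exp.2 (hmin hy)
  generalize Real.exp (A x0) = m at hm hmE
  refine ⟨min (1 / 2) (m * c0 / (4 * (M + 1))), by positivity, min_le_left _ _,
    m * c0 / 2, by positivity, ?_⟩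
  intro σ hσ hσ2 y hy
  have hs1 := hσ2.trans (min_le_left _ _)
  have hs2 := hσ2.trans (min_le_right _ _)
  rw [le_div_iff₀ (by positivity)] at hs2
  refine ⟨l1 σ y * (2 * k1 y * k22 y + k22' y) - 2 * σ * k22 y, ?_, ?_⟩
  · have hd := (((hA y hy).exp).mul (((hJ y hy).const_mul (2 * σ)).const_sub (1 + 2 * J r1))).mul
      (hk22 y hy)
    have he : Real.exp (A y) * Real.exp (-A y) = 1 := by
      rw [← Real.exp_add]; simp
    have hfun : (fun t => l1 σ t * k22 t) =
        fun t => (Real.exp (A t) * ((1 + 2 * J r1) - 2 * σ * J t)) * k22 t := by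
      funext t; rw [hl]
    rw [hfun]
    refine HasDerivWithinAt.congr_deriv hd ?_
    rw [hl]
    simp only [Pi.mul_apply]
    linear_combination (-2 * σ * k22 y) * he
  · have hlm : m ≤ l1 σ y := by
      rw [hl]
      have h0 := hJ0 y hy
      have h1 := hJ1 y hy
      have : 1 ≤ (1 + 2 * J r1) - 2 * σ * J y := by nlinarith
      nlinarith [hmE y hy]
    have hk := (abs_le.1 (hM y hy)).2
    have h3 : m * c0 ≤ l1 σ y * (2 * k1 y * k22 y + k22' y) :=
      mul_le_mul hlm (hpos y hy) hc0.le (hm.le.trans hlm)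
    have h4 : σ * k22 y ≤ σ * M := mul_le_mul_of_nonneg_left hk hσ.le
    nlinarith
end

section
/- Let 0 < r0 < r1 and let A11, A33, e1 : [r0, r1] → ℝ be continuous with A11(r) > 0, A33(r) > 0 and e1(r) > 0 for all r ∈ [r0, r1]. Let c ∈ ℝ and let ψ : [r0, r1] × ℝ → ℝ be bounded and continuous, twice continuously differentiable on [r0, r1) × ℝ, satisfying A11(r) ∂_r²ψ + A33(r) ∂_{x3}²ψ + e1(r) ∂_rψ = 0 on (r0, r1) × ℝ, ∂_rψ(r0, x3) = 0 for all x3 ∈ ℝ, and ψ(r1, x3) = c for all x3 ∈ ℝ. Then ψ(r, x3) = c for all (r, x3) ∈ [r0, r1] × ℝ. -/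
open Real Set

theorem second_deriv_nonpos (f g : ℝ → ℝ) (a k : ℝ) (hm : IsLocalMax f a)
    (hf : ∀ᶠ s in nhds a, HasDerivAt f (g s) s) (hg : HasDerivAt g k a) : k ≤ 0 := by
  by_contra hk
  push Not at hk
  have hfg : deriv f =ᶠ[nhds a] g := hf.mono fun s hs => hs.deriv
  have h2 : deriv (deriv f) a = k := by rw [hfg.deriv_eq, hg.deriv]
  have hmin : IsLocalMin f a :=
    isLocalMin_of_deriv_deriv_pos (by rw [h2]; exact hk) hm.deriv_eq_zero
      hf.self_of_nhds.continuousAt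
  have hc : f =ᶠ[nhds a] fun _ => f a := by
    filter_upwards [hm, hmin] with s h1 h2 using le_antisymm h1 h2
  have h3 : deriv (deriv f) a = 0 := by
    have := hc.deriv
    rw [this.deriv_eq]; simp
  linarith

theorem strip_upper
    (r0 r1 c : ℝ) (hr0 : 0 < r0) (hr01 : r0 < r1)
    (A11 A33 e1 : ℝ → ℝ)
    (hA11c : ContinuousOn A11 (Icc r0 r1)) (hA33c : ContinuousOn A33 (Icc r0 r1))
    (he1c : ContinuousOn e1 (Icc r0 r1))
    (hA11 : ∀ r ∈ Icc r0 r1, 0 < A11 r) (hA33 : ∀ r ∈ Icc r0 r1, 0 < A33 r)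
    (he1 : ∀ r ∈ Icc r0 r1, 0 < e1 r)
    (ψ ψr ψrr ψx ψxx : ℝ → ℝ → ℝ)
    (hbdd : ∃ M : ℝ, ∀ r ∈ Icc r0 r1, ∀ x3 : ℝ, |ψ r x3| ≤ M)
    (hcont : ContinuousOn (fun p : ℝ × ℝ => ψ p.1 p.2) (Icc r0 r1 ×ˢ univ))
    (hψr : ∀ r ∈ Ico r0 r1, ∀ x3 : ℝ,
      HasDerivWithinAt (fun s => ψ s x3) (ψr r x3) (Icc r0 r1) r)
    (hψrr : ∀ r ∈ Ico r0 r1, ∀ x3 : ℝ,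
      HasDerivWithinAt (fun s => ψr s x3) (ψrr r x3) (Icc r0 r1) r)
    (hψx : ∀ r ∈ Ico r0 r1, ∀ x3 : ℝ, HasDerivAt (fun t => ψ r t) (ψx r x3) x3)
    (hψxx : ∀ r ∈ Ico r0 r1, ∀ x3 : ℝ, HasDerivAt (fun t => ψx r t) (ψxx r x3) x3)
    (hψrC : ContinuousOn (fun p : ℝ × ℝ => ψr p.1 p.2) (Ico r0 r1 ×ˢ univ))
    (hψxC : ContinuousOn (fun p : ℝ × ℝ => ψx p.1 p.2) (Ico r0 r1 ×ˢ univ))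
    (hψrrC : ContinuousOn (fun p : ℝ × ℝ => ψrr p.1 p.2) (Ico r0 r1 ×ˢ univ))
    (hψxxC : ContinuousOn (fun p : ℝ × ℝ => ψxx p.1 p.2) (Ico r0 r1 ×ˢ univ))
    (hPDE : ∀ r ∈ Ioo r0 r1, ∀ x3 : ℝ,
      A11 r * ψrr r x3 + A33 r * ψxx r x3 + e1 r * ψr r x3 = 0)
    (hNeu : ∀ x3 : ℝ, ψr r0 x3 = 0)
    (hDir : ∀ x3 : ℝ, ψ r1 x3 = c) :
    ∀ r ∈ Icc r0 r1, ∀ x3 : ℝ, ψ r x3 ≤ c := by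
  obtain ⟨M, hM⟩ := hbdd
  obtain ⟨μ, hμ0, hμ⟩ : ∃ μ : ℝ, 0 < μ ∧ ∀ r ∈ Icc r0 r1, 2 * A33 r < μ * e1 r := by
    have hq : ContinuousOn (fun r => 2 * A33 r / e1 r) (Icc r0 r1) :=
      (continuousOn_const.mul hA33c).div he1c fun r hr => (he1 r hr).ne'
    obtain ⟨B, hB⟩ := (isCompact_Icc.image_of_continuousOn hq).bddAbove
    refine ⟨max B 0 + 1, by positivity, fun r hr => ?_⟩
    have h1 : 2 * A33 r / e1 r ≤ B := hB ⟨r, hr, rfl⟩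
    have h2 := le_max_left B 0
    rw [← div_lt_iff₀ (he1 r hr)]
    linarith
  have key : ∀ η : ℝ, 0 < η → ∀ r ∈ Icc r0 r1, ∀ x : ℝ,
      ψ r x - c - η * x ^ 2 + μ * η * (r - r1) ≤ 0 := by
    intro η hη r hr x
    by_contra hpos
    push Not at hpos
    set w : ℝ × ℝ → ℝ := fun p => ψ p.1 p.2 - c - η * p.2 ^ 2 + μ * η * (p.1 - r1) with hw
    obtain ⟨R, hRx, hR⟩ : ∃ R : ℝ, |x| ≤ R ∧ ∀ y : ℝ, |y| = R → M - c - η * y ^ 2 ≤ 0 := by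
      refine ⟨max |x| (1 + |M - c| / η), le_max_left _ _, fun y hy => ?_⟩
      have h1 : 1 + |M - c| / η ≤ |y| := hy ▸ le_max_right _ _
      have h0 : 0 ≤ |M - c| / η := by positivity
      have h2 : |M - c| / η ≤ y ^ 2 := by rw [← sq_abs]; nlinarith
      rw [div_le_iff₀ hη] at h2
      linarith [le_abs_self (M - c)]
    have hwc : ContinuousOn w (Icc r0 r1 ×ˢ Icc (-R) R) := by
      have h1 : ContinuousOn (fun p : ℝ × ℝ => ψ p.1 p.2) (Icc r0 r1 ×ˢ Icc (-R) R) :=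
        hcont.mono (prod_mono_right (subset_univ _))
      have h2 : Continuous fun p : ℝ × ℝ => η * p.2 ^ 2 := by fun_prop
      have h3 : Continuous fun p : ℝ × ℝ => μ * η * (p.1 - r1) := by fun_prop
      exact ((h1.sub continuousOn_const).sub h2.continuousOn).add h3.continuousOn
    have hxR : (r, x) ∈ Icc r0 r1 ×ˢ Icc (-R) R := ⟨hr, abs_le.1 hRx⟩
    obtain ⟨⟨a, y⟩, ⟨ha, hy⟩, hmax⟩ :=
      (isCompact_Icc.prod isCompact_Icc).exists_isMaxOn ⟨_, hxR⟩ hwc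
    simp only at ha hy
    have hwpos : 0 < w (a, y) := lt_of_lt_of_le hpos (hmax hxR)
    simp only [hw] at hwpos
    have hμη : 0 < μ * η := mul_pos hμ0 hη
    have ha1 : a < r1 := by
      refine lt_of_le_of_ne ha.2 ?_
      rintro rfl
      rw [hDir] at hwpos
      nlinarith [sq_nonneg y]
    have hyR : |y| < R := by
      refine lt_of_le_of_ne (abs_le.2 hy) fun h => ?_
      have h1 := hR y h
      have h2 := le_trans (le_abs_self _) (hM a ha y)
      nlinarith [ha.2]
    have haI : a ∈ Ico r0 r1 := ⟨ha.1, ha1⟩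
    have hmr : IsMaxOn (fun s => ψ s y + μ * η * s) (Icc r0 r1) a := by
      intro s hs
      have h : w (s, y) ≤ w (a, y) := hmax (show (s, y) ∈ _ from ⟨hs, hy⟩)
      simp only [hw] at h
      show ψ s y + μ * η * s ≤ ψ a y + μ * η * a
      linarith
    have hdr : ∀ s ∈ Ico r0 r1, HasDerivWithinAt (fun s => ψ s y + μ * η * s)
        (ψr s y + μ * η) (Icc r0 r1) s := by
      intro s hs
      exact ((hψr s hs y).add ((hasDerivWithinAt_id s _).const_mul (μ * η))).congr_deriv (by simp)
    have ha0 : r0 < a := by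
      refine lt_of_le_of_ne ha.1 ?_
      rintro rfl
      have h1 := hmr.localize.hasFDerivWithinAt_nonpos (hdr r0 haI).hasFDerivWithinAt
        (y := r1 - r0)
        (sub_mem_posTangentConeAt_of_segment_subset (by rw [segment_eq_Icc hr01.le]))
      simp [hNeu] at h1
      nlinarith
    have hnb : ∀ᶠ s in nhds a, s ∈ Ioo r0 r1 := Ioo_mem_nhds ha0 ha1
    have hIcc : ∀ s ∈ Ioo r0 r1, Icc r0 r1 ∈ nhds s := fun s hs => Icc_mem_nhds hs.1 hs.2
    have hlr : IsLocalMax (fun s => ψ s y + μ * η * s) a := hmr.isLocalMax (hIcc a ⟨ha0, ha1⟩)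
    have hdr' : ∀ s ∈ Ioo r0 r1, HasDerivAt (fun s => ψ s y + μ * η * s) (ψr s y + μ * η) s :=
      fun s hs => (hdr s ⟨hs.1.le, hs.2⟩).hasDerivAt (hIcc s hs)
    have e1' : ψr a y + μ * η = 0 := hlr.hasDerivAt_eq_zero (hdr' a ⟨ha0, ha1⟩)
    have e2 : ψrr a y ≤ 0 := second_deriv_nonpos _ (fun s => ψr s y + μ * η) a _ hlr
      (hnb.mono hdr') (((hψrr a haI y).hasDerivAt (hIcc a ⟨ha0, ha1⟩)).add_const _)
    have hlx : IsLocalMax (fun t => ψ a t - η * t ^ 2) y := by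
      have : Ioo (-R) R ∈ nhds y := Ioo_mem_nhds (abs_lt.1 hyR).1 (abs_lt.1 hyR).2
      filter_upwards [this] with t ht
      have h : w (a, t) ≤ w (a, y) := hmax (show (a, t) ∈ _ from ⟨ha, ht.1.le, ht.2.le⟩)
      simp only [hw] at h
      linarith
    have e3 : ψxx a y - 2 * η ≤ 0 := by
      refine second_deriv_nonpos _ (fun t => ψx a t - 2 * η * t) y _ hlx
        (Filter.Eventually.of_forall fun t => ?_) ?_
      · have h := (hψx a haI t).sub ((hasDerivAt_pow 2 t).const_mul η)
        exact h.congr_deriv (by push_cast; ring)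
      · exact ((hψxx a haI y).sub ((hasDerivAt_id y).const_mul (2 * η))).congr_deriv (by simp)
    have hp := hPDE a ⟨ha0, ha1⟩ y
    have h1 := mul_nonneg (hA11 a ha).le (neg_nonneg.2 e2)
    have h2 := mul_nonneg (hA33 a ha).le (neg_nonneg.2 e3)
    have h3 := mul_pos hη (sub_pos.2 (hμ a ha))
    have h4 : ψr a y = - (μ * η) := by linarith
    rw [h4] at hp
    nlinarith
  intro r hr x
  have hK : 0 ≤ x ^ 2 + μ * (r1 - r) := by
    have := mul_nonneg hμ0.le (sub_nonneg.2 hr.2)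
    positivity
  refine le_of_forall_pos_le_add fun ε hε => ?_
  have h := key (ε / (x ^ 2 + μ * (r1 - r) + 1)) (by positivity) r hr x
  have h2 : ε / (x ^ 2 + μ * (r1 - r) + 1) * (x ^ 2 + μ * (r1 - r)) ≤ ε := by
    rw [div_mul_eq_mul_div, div_le_iff₀ (by positivity)]
    nlinarith
  linarith

/-- Liouville-type uniqueness on the infinite strip `[r0, r1] × ℝ`:
a bounded solution of `A11 ∂_r²ψ + A33 ∂_{x3}²ψ + e1 ∂_rψ = 0` with homogeneous Neumann
condition at `r = r0` and constant Dirichlet value `c` at `r = r1` is identically `c`. -/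
theorem strip_liouville
    (r0 r1 c : ℝ) (hr0 : 0 < r0) (hr01 : r0 < r1)
    (A11 A33 e1 : ℝ → ℝ)
    (hA11c : ContinuousOn A11 (Icc r0 r1)) (hA33c : ContinuousOn A33 (Icc r0 r1))
    (he1c : ContinuousOn e1 (Icc r0 r1))
    (hA11 : ∀ r ∈ Icc r0 r1, 0 < A11 r) (hA33 : ∀ r ∈ Icc r0 r1, 0 < A33 r)
    (he1 : ∀ r ∈ Icc r0 r1, 0 < e1 r)
    (ψ ψr ψrr ψx ψxx : ℝ → ℝ → ℝ)
    (hbdd : ∃ M : ℝ, ∀ r ∈ Icc r0 r1, ∀ x3 : ℝ, |ψ r x3| ≤ M)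
    (hcont : ContinuousOn (fun p : ℝ × ℝ => ψ p.1 p.2) (Icc r0 r1 ×ˢ univ))
    (hψr : ∀ r ∈ Ico r0 r1, ∀ x3 : ℝ,
      HasDerivWithinAt (fun s => ψ s x3) (ψr r x3) (Icc r0 r1) r)
    (hψrr : ∀ r ∈ Ico r0 r1, ∀ x3 : ℝ,
      HasDerivWithinAt (fun s => ψr s x3) (ψrr r x3) (Icc r0 r1) r)
    (hψx : ∀ r ∈ Ico r0 r1, ∀ x3 : ℝ, HasDerivAt (fun t => ψ r t) (ψx r x3) x3)
    (hψxx : ∀ r ∈ Ico r0 r1, ∀ x3 : ℝ, HasDerivAt (fun t => ψx r t) (ψxx r x3) x3)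
    (hψrC : ContinuousOn (fun p : ℝ × ℝ => ψr p.1 p.2) (Ico r0 r1 ×ˢ univ))
    (hψxC : ContinuousOn (fun p : ℝ × ℝ => ψx p.1 p.2) (Ico r0 r1 ×ˢ univ))
    (hψrrC : ContinuousOn (fun p : ℝ × ℝ => ψrr p.1 p.2) (Ico r0 r1 ×ˢ univ))
    (hψxxC : ContinuousOn (fun p : ℝ × ℝ => ψxx p.1 p.2) (Ico r0 r1 ×ˢ univ))
    (hPDE : ∀ r ∈ Ioo r0 r1, ∀ x3 : ℝ,
      A11 r * ψrr r x3 + A33 r * ψxx r x3 + e1 r * ψr r x3 = 0)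
    (hNeu : ∀ x3 : ℝ, ψr r0 x3 = 0)
    (hDir : ∀ x3 : ℝ, ψ r1 x3 = c) :
    ∀ r ∈ Icc r0 r1, ∀ x3 : ℝ, ψ r x3 = c := by
  intro r hr x
  refine le_antisymm
    (strip_upper r0 r1 c hr0 hr01 A11 A33 e1 hA11c hA33c he1c hA11 hA33 he1 ψ ψr ψrr ψx ψxx hbdd
      hcont hψr hψrr hψx hψxx hψrC hψxC hψrrC hψxxC hPDE hNeu hDir r hr x) ?_
  have h := strip_upper r0 r1 (-c) hr0 hr01 A11 A33 e1 hA11c hA33c he1c hA11 hA33 he1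
    (fun r x => -ψ r x) (fun r x => -ψr r x) (fun r x => -ψrr r x) (fun r x => -ψx r x)
    (fun r x => -ψxx r x) (by simpa using hbdd)
    hcont.neg (fun r hr x => (hψr r hr x).neg) (fun r hr x => (hψrr r hr x).neg)
    (fun r hr x => (hψx r hr x).neg) (fun r hr x => (hψxx r hr x).neg)
    hψrC.neg hψxC.neg hψrrC.neg hψxxC.neg
    (fun r hr x => by linarith [hPDE r hr x]) (fun x => by simp [hNeu]) (fun x => by simp [hDir])
    r hr x
  linarith
end

section
/- Let 0 < r0 < r1, n > 0, and let Q = (r0, r1) × (−n, n). Let A11, A33, e1 : [r0, r1] → ℝ be continuous with A11 > 0, A33 > 0 and e1(r) ≥ e_min > 0 on [r0, r1]. Then there exists a constant C, depending only on r1 and e_min, with the following property: if φ is continuous on the closure of Q, twice continuously differentiable in Q with ∂_rφ extending continuously to {r0} × [−n, n], and satisfies A11(r) ∂_r²φ + A33(r) ∂_{x3}²φ + e1(r) ∂_rφ = G in Q, ∂_rφ(r0, x3) = g(x3) for x3 ∈ [−n, n], and |φ| ≤ h0 on the remaining three boundary sides {r1} × [−n, n], [r0, r1] × {−n} and [r0,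 r1] × {n}, then sup over the closure of Q of |φ| is at most C · (sup_Q |G| + sup |g| + h0). -/
open Real Set

lemma aux_second_deriv {f f' : ℝ → ℝ} {a c : ℝ}
    (hmax : IsLocalMax f a) (hf : ∀ᶠ t in nhds a, HasDerivAt f (f' t) t)
    (hf' : HasDerivAt f' c a) : c ≤ 0 := by
  by_contra hc
  push Not at hc
  have hd : deriv f =ᶠ[nhds a] f' := hf.mono fun t ht => ht.deriv
  have h2 : deriv (deriv f) a = c := by rw [hd.deriv_eq]; exact hf'.deriv
  have hmin : IsLocalMin f a := by
    apply isLocalMin_of_deriv_deriv_pos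
    · rw [h2]; exact hc
    · exact hmax.deriv_eq_zero
    · exact hf.self_of_nhds.continuousAt
  have hconst : f =ᶠ[nhds a] fun _ => f a := by
    filter_upwards [hmin, hmax] with t h1 h2 using le_antisymm h2 h1
  have h3 : deriv f =ᶠ[nhds a] deriv (fun _ => f a) := hconst.deriv
  have h4 := h3.deriv_eq
  simp [h2] at h4
  exact hc.ne' h4

lemma aux_upper (r1 emin : ℝ) (hr1 : 0 < r1) (r0 : ℝ) (hr0 : 0 < r0) (h01 : r0 < r1)
    (n : ℝ) (hn : 0 < n) (A11 A33 e1 : ℝ → ℝ)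
    (hA1 : ∀ r ∈ Icc r0 r1, 0 < A11 r) (hA3 : ∀ r ∈ Icc r0 r1, 0 < A33 r)
    (he : ∀ r ∈ Icc r0 r1, emin ≤ e1 r)
    (φ φr φrr φx φxx : ℝ → ℝ → ℝ) (h0 MG Mg k : ℝ)
    (hc : ContinuousOn (fun p : ℝ × ℝ => φ p.1 p.2) (Icc r0 r1 ×ˢ Icc (-n) n))
    (d1 : ∀ r ∈ Ioo r0 r1, ∀ x ∈ Ioo (-n) n, HasDerivAt (fun s => φ s x) (φr r x) r)
    (d2 : ∀ r ∈ Ioo r0 r1, ∀ x ∈ Ioo (-n) n, HasDerivAt (fun s => φr s x) (φrr r x) r)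
    (d3 : ∀ r ∈ Ioo r0 r1, ∀ x ∈ Ioo (-n) n, HasDerivAt (fun t => φ r t) (φx r x) x)
    (d4 : ∀ r ∈ Ioo r0 r1, ∀ x ∈ Ioo (-n) n, HasDerivAt (fun t => φx r t) (φxx r x) x)
    (hcr : ContinuousOn (fun p : ℝ × ℝ => φr p.1 p.2)
        ((Ioo r0 r1 ×ˢ Ioo (-n) n) ∪ ({r0} ×ˢ Icc (-n) n)))
    (hG : ∀ r ∈ Ioo r0 r1, ∀ x ∈ Ioo (-n) n,
        -MG ≤ A11 r * φrr r x + A33 r * φxx r x + e1 r * φr r x)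
    (hg : ∀ x ∈ Icc (-n) n, -Mg ≤ φr r0 x)
    (b1 : ∀ x ∈ Icc (-n) n, φ r1 x ≤ h0)
    (b2 : ∀ r ∈ Icc r0 r1, φ r n ≤ h0)
    (b3 : ∀ r ∈ Icc r0 r1, φ r (-n) ≤ h0)
    (hk0 : 0 < k) (hk1 : MG < k * emin) (hk2 : Mg < k) :
    ∀ r ∈ Icc r0 r1, ∀ x ∈ Icc (-n) n, φ r x ≤ h0 + k * r1 := by
  have hcomp : IsCompact (Icc r0 r1 ×ˢ Icc (-n) n) := isCompact_Icc.prod isCompact_Icc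
  have hcw : ContinuousOn (fun p : ℝ × ℝ => φ p.1 p.2 + k * p.1) (Icc r0 r1 ×ˢ Icc (-n) n) :=
    hc.add (by fun_prop)
  obtain ⟨⟨a, b⟩, ⟨ha, hb⟩, hmax⟩ := hcomp.exists_isMaxOn
    ⟨(r0, n), ⟨⟨le_rfl, h01.le⟩, ⟨by simp; linarith, le_rfl⟩⟩⟩ hcw
  simp only at ha hb
  have hmax' : ∀ r ∈ Icc r0 r1, ∀ x ∈ Icc (-n) n, φ r x + k * r ≤ φ a b + k * a :=
    fun r hr x hx => hmax (show (r, x) ∈ Icc r0 r1 ×ˢ Icc (-n) n from ⟨hr, hx⟩)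
  suffices hs : φ a b ≤ h0 by
    intro r hr x hx
    have h1 := hmax' r hr x hx
    have h2 : k * a ≤ k * r1 := mul_le_mul_of_nonneg_left ha.2 hk0.le
    have h3 : 0 < k * r := mul_pos hk0 (hr0.trans_le hr.1)
    linarith
  rcases eq_or_lt_of_le hb.1 with hb1 | hb1
  · rw [← hb1]; exact b3 a ha
  rcases eq_or_lt_of_le hb.2 with hb2 | hb2
  · rw [hb2]; exact b2 a ha
  rcases eq_or_lt_of_le ha.2 with ha2 | ha2
  · rw [ha2]; exact b1 b hb
  exfalso
  rcases eq_or_lt_of_le ha.1 with ha1 | ha1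
  · subst ha1
    have hcont : ContinuousWithinAt (fun s => φr s b) (Ico r0 r1) r0 := by
      have := hcr (r0, b) (Or.inr ⟨rfl, hb⟩)
      refine ContinuousWithinAt.comp (g := fun p : ℝ × ℝ => φr p.1 p.2)
        (f := fun s : ℝ => (s, b)) this (by fun_prop) ?_
      intro s hs
      rcases eq_or_lt_of_le hs.1 with h | h
      · exact Or.inr ⟨h.symm, hb⟩
      · exact Or.inl ⟨⟨h, hs.2⟩, ⟨hb1, hb2⟩⟩
    have hpos : -k < φr r0 b := by have := hg b hb; linarith
    have hev : ∀ᶠ s in nhdsWithin r0 (Ico r0 r1), -k < φr s b :=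
      hcont.eventually_const_lt hpos
    rw [nhdsWithin_Ico_eq_nhdsGE h01] at hev
    obtain ⟨u, hu, hsub⟩ := (mem_nhdsGE_iff_exists_Ico_subset' h01).1 hev
    obtain ⟨s, hs1, hs2⟩ := exists_between (lt_min (show r0 < u from hu) h01)
    have hsu : s < u := hs2.trans_le (min_le_left _ _)
    have hsr : s < r1 := hs2.trans_le (min_le_right _ _)
    have hcs : ContinuousOn (fun t => φ t b + k * t) (Icc r0 s) := by
      refine ContinuousOn.comp (g := fun p : ℝ × ℝ => φ p.1 p.2 + k * p.1)
        (f := fun s : ℝ => (s, b)) hcw (by fun_prop) ?_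
      intro t ht
      exact ⟨⟨ht.1, ht.2.trans hsr.le⟩, hb⟩
    obtain ⟨c, hcI, hceq⟩ := exists_hasDerivAt_eq_slope (fun t => φ t b + k * t)
      (fun t => φr t b + k) hs1 hcs (fun t ht => by
        have := (d1 t ⟨ht.1, ht.2.trans hsr⟩ b ⟨hb1, hb2⟩).fun_add (hasDerivAt_const_mul (x := t) k)
        exact this)
    have h1 : -k < φr c b := hsub ⟨hcI.1.le, hcI.2.trans hsu⟩
    have h2 := hmax' s ⟨hs1.le, hsr.le⟩ b hb
    have h3 : (φ s b + k * s - (φ r0 b + k * r0)) / (s - r0) ≤ 0 :=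
      div_nonpos_of_nonpos_of_nonneg (by linarith) (by linarith)
    linarith
  · have hIa : Ioo r0 r1 ∈ nhds a := Ioo_mem_nhds ha1 ha2
    have hIb : Ioo (-n) n ∈ nhds b := Ioo_mem_nhds hb1 hb2
    have m1 : IsLocalMax (fun s => φ s b + k * s) a := by
      filter_upwards [hIa] with s hs using hmax' s ⟨hs.1.le, hs.2.le⟩ b hb
    have m2 : IsLocalMax (fun t => φ a t) b := by
      filter_upwards [hIb] with t ht
      have := hmax' a ha t ⟨ht.1.le, ht.2.le⟩
      linarith
    have e1' : ∀ s ∈ Ioo r0 r1, HasDerivAt (fun s => φ s b + k * s) (φr s b + k) s := by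
      intro s hs
      have := (d1 s hs b ⟨hb1, hb2⟩).fun_add (hasDerivAt_const_mul (x := s) k)
      exact this
    have q1 : φr a b + k = 0 := m1.hasDerivAt_eq_zero (e1' a ⟨ha1, ha2⟩)
    have q2 : φrr a b ≤ 0 := aux_second_deriv m1
      (by filter_upwards [hIa] with s hs using e1' s hs)
      ((d2 a ⟨ha1, ha2⟩ b ⟨hb1, hb2⟩).add_const k)
    have q3 : φxx a b ≤ 0 := aux_second_deriv m2
      (by filter_upwards [hIb] with t ht using d3 a ⟨ha1, ha2⟩ t ht)
      (d4 a ⟨ha1, ha2⟩ b ⟨hb1, hb2⟩)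
    have q4 := hG a ⟨ha1, ha2⟩ b ⟨hb1, hb2⟩
    have q5 := mul_nonpos_of_nonneg_of_nonpos (hA1 a ha).le q2
    have q6 := mul_nonpos_of_nonneg_of_nonpos (hA3 a ha).le q3
    have q7 : φr a b = -k := by linarith
    rw [q7] at q4
    have q8 := mul_le_mul_of_nonneg_left (he a ha) hk0.le
    nlinarith

/-- uniform-in-`n` maximum-principle estimate for the truncated mixed
Neumann–Dirichlet problems on `Q = (r0,r1) × (−n,n)`: there is a constant `C` depending
only on `r1` and `e_min` bounding `sup |φ|` by `C (sup|G| + sup|g| + h0)`. -/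
theorem truncated_max_principle
    (r1 emin : ℝ) (hr1 : 0 < r1) (hemin : 0 < emin) :
    ∃ C > 0, ∀ r0 : ℝ, 0 < r0 → r0 < r1 → ∀ n : ℝ, 0 < n →
      ∀ A11 A33 e1 : ℝ → ℝ,
      ContinuousOn A11 (Icc r0 r1) → ContinuousOn A33 (Icc r0 r1) →
      ContinuousOn e1 (Icc r0 r1) →
      (∀ r ∈ Icc r0 r1, 0 < A11 r) → (∀ r ∈ Icc r0 r1, 0 < A33 r) →
      (∀ r ∈ Icc r0 r1, emin ≤ e1 r) →
      ∀ φ φr φrr φx φxx G : ℝ → ℝ → ℝ, ∀ g : ℝ → ℝ, ∀ h0 MG Mg : ℝ,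
      ContinuousOn (fun p : ℝ × ℝ => φ p.1 p.2) (Icc r0 r1 ×ˢ Icc (-n) n) →
      (∀ r ∈ Ioo r0 r1, ∀ x ∈ Ioo (-n) n, HasDerivAt (fun s => φ s x) (φr r x) r) →
      (∀ r ∈ Ioo r0 r1, ∀ x ∈ Ioo (-n) n, HasDerivAt (fun s => φr s x) (φrr r x) r) →
      (∀ r ∈ Ioo r0 r1, ∀ x ∈ Ioo (-n) n, HasDerivAt (fun t => φ r t) (φx r x) x) →
      (∀ r ∈ Ioo r0 r1, ∀ x ∈ Ioo (-n) n, HasDerivAt (fun t => φx r t) (φxx r x) x) →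
      ContinuousOn (fun p : ℝ × ℝ => φr p.1 p.2)
        ((Ioo r0 r1 ×ˢ Ioo (-n) n) ∪ ({r0} ×ˢ Icc (-n) n)) →
      (∀ r ∈ Ioo r0 r1, ∀ x ∈ Ioo (-n) n,
        A11 r * φrr r x + A33 r * φxx r x + e1 r * φr r x = G r x) →
      (∀ x ∈ Icc (-n) n, φr r0 x = g x) →
      0 ≤ h0 →
      (∀ x ∈ Icc (-n) n, |φ r1 x| ≤ h0) →
      (∀ r ∈ Icc r0 r1, |φ r n| ≤ h0) →
      (∀ r ∈ Icc r0 r1, |φ r (-n)| ≤ h0) →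
      (∀ r ∈ Ioo r0 r1, ∀ x ∈ Ioo (-n) n, |G r x| ≤ MG) →
      (∀ x ∈ Icc (-n) n, |g x| ≤ Mg) →
      ∀ r ∈ Icc r0 r1, ∀ x ∈ Icc (-n) n, |φ r x| ≤ C * (MG + Mg + h0) := by
  refine ⟨1 + r1 + r1 / emin, by positivity, ?_⟩
  intro r0 hr0 h01 n hn A11 A33 e1 _ _ _ hA1 hA3 he φ φr φrr φx φxx G g h0 MG Mg
    hc d1 d2 d3 d4 hcr hG hg hh b1 b2 b3 hMG hMg r hr x hx
  have hMG0 : 0 ≤ MG := (abs_nonneg _).trans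
    (hMG ((r0 + r1) / 2) ⟨by linarith, by linarith⟩ 0 ⟨by linarith, hn⟩)
  have hMg0 : 0 ≤ Mg := (abs_nonneg _).trans (hMg 0 ⟨by linarith, hn.le⟩)
  have key : ∀ k, MG / emin + Mg < k → |φ r x| ≤ h0 + k * r1 := by
    intro k hk
    have hdiv : 0 ≤ MG / emin := by positivity
    have hk0 : 0 < k := by linarith
    have hk1 : MG < k * emin := by
      rw [← div_lt_iff₀ hemin]; linarith
    have hk2 : Mg < k := by linarith
    have up := aux_upper r1 emin hr1 r0 hr0 h01 n hn A11 A33 e1 hA1 hA3 he φ φr φrr φx φxx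
      h0 MG Mg k hc d1 d2 d3 d4 hcr
      (fun r hr x hx => by rw [hG r hr x hx]; exact (abs_le.1 (hMG r hr x hx)).1)
      (fun x hx => by rw [hg x hx]; exact (abs_le.1 (hMg x hx)).1)
      (fun x hx => (abs_le.1 (b1 x hx)).2) (fun x hx => (abs_le.1 (b2 x hx)).2)
      (fun x hx => (abs_le.1 (b3 x hx)).2) hk0 hk1 hk2 r hr x hx
    have lo := aux_upper r1 emin hr1 r0 hr0 h01 n hn A11 A33 e1 hA1 hA3 he
      (fun r x => -φ r x) (fun r x => -φr r x) (fun r x => -φrr r x)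
      (fun r x => -φx r x) (fun r x => -φxx r x)
      h0 MG Mg k hc.neg (fun r hr x hx => (d1 r hr x hx).neg)
      (fun r hr x hx => (d2 r hr x hx).neg) (fun r hr x hx => (d3 r hr x hx).neg)
      (fun r hr x hx => (d4 r hr x hx).neg) hcr.neg
      (fun r hr x hx => by
        have h1 := hG r hr x hx
        have h2 := (abs_le.1 (hMG r hr x hx)).2
        linarith)
      (fun x hx => by rw [hg x hx]; linarith [(abs_le.1 (hMg x hx)).2])
      (fun x hx => by linarith [(abs_le.1 (b1 x hx)).1])
      (fun x hx => by linarith [(abs_le.1 (b2 x hx)).1])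
      (fun x hx => by linarith [(abs_le.1 (b3 x hx)).1]) hk0 hk1 hk2 r hr x hx
    rw [abs_le]
    constructor <;> linarith
  have fin : |φ r x| ≤ h0 + (MG / emin + Mg) * r1 := by
    refine le_of_forall_pos_le_add fun ε hε => ?_
    have := key (MG / emin + Mg + ε / r1) (by have : 0 < ε / r1 := by positivity
                                              linarith)
    have h2 : ε / r1 * r1 = ε := by field_simp
    linarith
  refine fin.trans ?_
  have t1 : MG / emin * r1 = r1 / emin * MG := by ring
  have t2 : 0 ≤ r1 / emin * Mg := by positivity
  have t3 : 0 ≤ r1 / emin * h0 := by positivity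
  have t4 : 0 ≤ r1 * MG := by positivity
  have t5 : 0 ≤ r1 * h0 := by positivity
  nlinarith
end
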